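/- Let a, b, c be real numbers, let q(x) = x^4 + 4x^3 + ax^2 + bx + c and let P(x) = (1/6)x^6 + (4/5)x^5 + (a/4)x^4 + (b/3)x^3 + (c/2)x^2 (so that P'(x) = x·q(x)). If x0 is a nonzero real number with q(x0) = 0 and P(x0) = 0, then z(a, b, c) = 0, where z(a,b,c) = 5625a^4c − 1250a^3b^2 − 21600a^3c + 4800a^2b^2 − 120000a^2bc − 60000a^2c^2 + 24000ab^3 + 60000ab^2c + 414720abc + 1036800ac^2 − 10000b^4 − 81920b^3 − 38400b^2c − 384000bc^2 + 160000c^3 − 2985984c^2. In other words, z(a, b, c) ≠ 0 guarantees that the values of P at the roots of q are nonzero (i.e., different from the critical value P(0) = 0). -/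

import Mathlib

/-!
Put `s(x) = 20x³ + 72x² + 15ax + 10b`. Then `30x² q(x) - 60 P(x) = x³ s(x)`, so a nonzero `x₀` with
`q(x₀) = P(x₀) = 0` is a common root of `q` and `s`, and the resultant of `q` and `s` vanishes. That
resultant is `z(a, b, c)`.
-/

namespace SexticCriticalValue

open Polynomial

variable {R : Type*} [CommRing R]

theorem resultant_eq_zero_of_isRoot {f g : R[X]} {m n : ℕ} {x : R} (hf : f.natDegree ≤ m)
    (hg : g.natDegree ≤ n) (hmn : m ≠ 0 ∨ n ≠ 0) (hfx : f.IsRoot x) (hgx : g.IsRoot x) :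
    resultant f g m n = 0 := by
  obtain ⟨p, q, -, -, bezout⟩ := exists_mul_add_mul_eq_C_resultant f g hf hg hmn
  simpa [hfx.eq_zero, hgx.eq_zero] using (congrArg (eval x) bezout).symm

theorem sylvester_four_three (f g : R[X]) :
    sylvester f g 4 3 =
      !![g.coeff 0, 0, 0, 0, f.coeff 0, 0, 0;
        g.coeff 1, g.coeff 0, 0, 0, f.coeff 1, f.coeff 0, 0;
        g.coeff 2, g.coeff 1, g.coeff 0, 0, f.coeff 2, f.coeff 1, f.coeff 0;
        g.coeff 3, g.coeff 2, g.coeff 1, g.coeff 0, f.coeff 3, f.coeff 2, f.coeff 1;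
        0, g.coeff 3, g.coeff 2, g.coeff 1, f.coeff 4, f.coeff 3, f.coeff 2;
        0, 0, g.coeff 3, g.coeff 2, 0, f.coeff 4, f.coeff 3;
        0, 0, 0, g.coeff 3, 0, 0, f.coeff 4] := by
  ext i j
  fin_cases i <;> fin_cases j <;> simp [sylvester, Fin.addCases]

/-- The quartic cofactor `q` in `P' = X * q`, over an arbitrary commutative ring. -/
noncomputable def criticalQuartic (a b c : R) : R[X] :=
  X ^ 4 + C 4 * X ^ 3 + C a * X ^ 2 + C b * X + C c

/-- The cubic `s = (30 * X ^ 2 * q - 60 * P) / X ^ 3`, which vanishes at the nonzero common roots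
of `q` and `P`. The factor `60` clears the denominators of `P`, and then `30` cancels `c`. -/
noncomputable def eliminationCubic (a b : R) : R[X] :=
  C 20 * X ^ 3 + C 72 * X ^ 2 + C (15 * a) * X + C (10 * b)

/-- The polynomial `z(a, b, c)` of the statement, over an arbitrary commutative ring. -/
def criticalValueEliminant (a b c : R) : R :=
  5625 * a ^ 4 * c - 1250 * a ^ 3 * b ^ 2 - 21600 * a ^ 3 * c + 4800 * a ^ 2 * b ^ 2
    - 120000 * a ^ 2 * b * c - 60000 * a ^ 2 * c ^ 2 + 24000 * a * b ^ 3
    + 60000 * a * b ^ 2 * c + 414720 * a * b * c + 1036800 * a * c ^ 2 - 10000 * b ^ 4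
    - 81920 * b ^ 3 - 38400 * b ^ 2 * c - 384000 * b * c ^ 2 + 160000 * c ^ 3
    - 2985984 * c ^ 2

theorem natDegree_criticalQuartic_le (a b c : R) : (criticalQuartic a b c).natDegree ≤ 4 := by
  unfold criticalQuartic
  compute_degree

theorem natDegree_eliminationCubic_le (a b : R) : (eliminationCubic a b).natDegree ≤ 3 := by
  unfold eliminationCubic
  compute_degree

theorem sylvester_criticalQuartic_eliminationCubic (a b c : R) :
    sylvester (criticalQuartic a b c) (eliminationCubic a b) 4 3 =
      !![10 * b, 0, 0, 0, c, 0, 0;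
        15 * a, 10 * b, 0, 0, b, c, 0;
        72, 15 * a, 10 * b, 0, a, b, c;
        20, 72, 15 * a, 10 * b, 4, a, b;
        0, 20, 72, 15 * a, 1, 4, a;
        0, 0, 20, 72, 0, 1, 4;
        0, 0, 0, 20, 0, 0, 1] := by
  rw [sylvester_four_three]
  simp [criticalQuartic, eliminationCubic, coeff_X, coeff_C, coeff_X_pow]

theorem resultant_criticalQuartic_eliminationCubic (a b c : R) :
    resultant (criticalQuartic a b c) (eliminationCubic a b) 4 3 =
      criticalValueEliminant a b c := by
  rw [resultant, sylvester_criticalQuartic_eliminationCubic, criticalValueEliminant]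
  simp [Matrix.det_succ_row_zero (n := 6), Matrix.det_succ_row_zero (n := 5),
    Matrix.det_succ_row_zero (n := 4), Matrix.det_succ_row_zero (n := 3), Matrix.det_fin_three,
    Fin.sum_univ_succ, Fin.succAbove]
  ring

theorem isRoot_eliminationCubic {a b c x : R} (hx : x ∈ nonZeroDivisors R)
    (hq : x ^ 4 + 4 * x ^ 3 + a * x ^ 2 + b * x + c = 0)
    (hP : 10 * x ^ 6 + 48 * x ^ 5 + 15 * a * x ^ 4 + 20 * b * x ^ 3 + 30 * c * x ^ 2 = 0) :
    (eliminationCubic a b).IsRoot x := by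
  have cubic_mul_eq_zero : (20 * x ^ 3 + 72 * x ^ 2 + 15 * a * x + 10 * b) * x ^ 3 = 0 := by
    linear_combination 30 * x ^ 2 * hq - hP
  simpa [eliminationCubic] using
    (mul_right_mem_nonZeroDivisors_eq_zero_iff (pow_mem hx 3)).1 cubic_mul_eq_zero

end SexticCriticalValue

open SexticCriticalValue in
/-- `hP` is `60 * P(x₀) = 0`, so that no denominators occur. -/
theorem deg6_zero_critical_value_imp_z_zero_general {R : Type*} [CommRing R] {a b c x₀ : R}
    (hx₀ : x₀ ∈ nonZeroDivisors R)
    (hq : x₀ ^ 4 + 4 * x₀ ^ 3 + a * x₀ ^ 2 + b * x₀ + c = 0)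
    (hP : 10 * x₀ ^ 6 + 48 * x₀ ^ 5 + 15 * a * x₀ ^ 4 + 20 * b * x₀ ^ 3
      + 30 * c * x₀ ^ 2 = 0) :
    criticalValueEliminant a b c = 0 := by
  have quartic_isRoot : (criticalQuartic a b c).IsRoot x₀ := by simpa [criticalQuartic] using hq
  rw [← resultant_criticalQuartic_eliminationCubic]
  exact resultant_eq_zero_of_isRoot (natDegree_criticalQuartic_le a b c)
    (natDegree_eliminationCubic_le a b) (.inl four_ne_zero) quartic_isRoot
    (isRoot_eliminationCubic hx₀ hq hP)

/-- Let `q(x) = x⁴ + 4x³ + ax² + bx + c` and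
`P(x) = (1/6)x⁶ + (4/5)x⁵ + (a/4)x⁴ + (b/3)x³ + (c/2)x²` (so `P' = x·q`).
If a nonzero real root `x₀` of `q` satisfies `P(x₀) = 0`, then `z(a,b,c) = 0`:
the nonvanishing of `z` guarantees that the values of `P` at the roots of `q`
are nonzero. -/
theorem deg6_zero_critical_value_imp_z_zero (a b c x₀ : ℝ) (hx₀ : x₀ ≠ 0)
    (hq : x₀ ^ 4 + 4 * x₀ ^ 3 + a * x₀ ^ 2 + b * x₀ + c = 0)
    (hP : 1 / 6 * x₀ ^ 6 + 4 / 5 * x₀ ^ 5 + a / 4 * x₀ ^ 4 + b / 3 * x₀ ^ 3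
      + c / 2 * x₀ ^ 2 = 0) :
    5625 * a ^ 4 * c - 1250 * a ^ 3 * b ^ 2 - 21600 * a ^ 3 * c + 4800 * a ^ 2 * b ^ 2
      - 120000 * a ^ 2 * b * c - 60000 * a ^ 2 * c ^ 2 + 24000 * a * b ^ 3
      + 60000 * a * b ^ 2 * c + 414720 * a * b * c + 1036800 * a * c ^ 2 - 10000 * b ^ 4
      - 81920 * b ^ 3 - 38400 * b ^ 2 * c - 384000 * b * c ^ 2 + 160000 * c ^ 3
      - 2985984 * c ^ 2 = 0 := by
  exact deg6_zero_critical_value_imp_z_zero_general (mem_nonZeroDivisors_of_ne_zero hx₀) hq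
    (by linear_combination 60 * hP)
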